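/- Let A ∈ L(ℝ^d) have rank ≥ k, where 1 ≤ k < d, and let E ⊆ ℝ^d be a k-dimensional subspace with det(A|E) = r V_k(A) for some r ∈ (0,1]. Define F := {v ∈ ℝ^d : A v ⟂ A E}. Then F is a complement to E in ℝ^d, and the splitting ℝ^d = E ⊕ F satisfies: m(A|_E) ≥ r σ_k(A), ‖A|_F‖ ≤ r^{-1} σ_{k+1}(A), and ‖π_{E//F}‖ ≤ r^{-1}. -/

import Mathlib

/-!
The argument is carried out with Gram determinants `gramDet v = det ⟨v i, v j⟩`, the squared volumes
of parallelepipeds. Three facts about them are used: Pythagoras in the first vector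
(`gramDet_cons_add`), the bound of the height by the edge (`gramDet_cons_le`, which gives Hadamard's
inequality), and multiplicativity under linear maps (`gramDet_map`). The determinant `detOn A E`,
defined by ratios of Lebesgue volumes, is the square root of the Gram determinant of the images of
an orthonormal basis of `E` (`detOn_eq_sqrt`). Consequently `V_k(A)` bounds the volume of
`A v₁, …, A v_k` for all vectors of norm at most one (`gramDet_le_volGrowth_sq`).

Since `V_k(A) > 0`, `A` is injective on `E`, and orthogonal projection onto `A E` shows that
`F = {v : A v ⟂ A E}` complements `E`. Each of the three estimates compares two volumes.
* `m(A|_E)`: for a unit `e ∈ E` with orthogonal complement `E₁` in `E`,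
  `det(A|E) ≤ ‖A e‖ det(A|E₁)`, and `V_k(A) ≥ σ_k(A) det(A|E₁)` because `{v : A v ⟂ A E₁}` has
  codimension `k - 1`.
* the projection: if the unit vector `v` has `E`-component `e ≠ 0`, replacing `e / ‖e‖` by `v` in an
  orthonormal basis of `E` yields an image of volume at least `‖e‖ det(A|E)`.
* `‖A|_F‖`: for a unit `v ∈ F` and `G` of codimension `k`, the space `E + ℝ v` contains a unit vector
  of `G`, so `‖A v‖ det(A|E) ≤ ‖A|_G‖ V_k(A)`.
The singular value decomposition is not needed.
-/

open Metric Filter MeasureTheory Topology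

noncomputable section

section Defs

variable {V W : Type*} [NormedAddCommGroup V] [NormedSpace ℝ V]
  [NormedAddCommGroup W] [NormedSpace ℝ W]

/-- The operator norm of the restriction of `A` to the subspace `E`, `‖A|_E‖`. -/
noncomputable def restrNorm (A : V →L[ℝ] W) (E : Submodule ℝ V) : ℝ :=
  ‖A.comp E.subtypeL‖

/-- The minimal norm `m(A|_E) = inf {‖A v‖ : v ∈ E, ‖v‖ = 1}`. -/
noncomputable def minNorm (A : V →L[ℝ] W) (E : Submodule ℝ V) : ℝ :=
  sInf {r : ℝ | ∃ v ∈ E, ‖v‖ = 1 ∧ r = ‖A v‖}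

/-- `F` is a closed subspace of codimension `n`. -/
def ClosedCodim (F : Submodule ℝ V) (n : ℕ) : Prop :=
  IsClosed (F : Set V) ∧ FiniteDimensional ℝ (V ⧸ F) ∧ Module.finrank ℝ (V ⧸ F) = n

/-- The `k`-th Gelfand number of `A` (meaningful for `k ≥ 1`):
`c_k(A) = inf {‖A|_F‖ : F a closed subspace of codimension k - 1}`. -/
noncomputable def gelfand (k : ℕ) (A : V →L[ℝ] W) : ℝ :=
  sInf {r : ℝ | ∃ F : Submodule ℝ V, ClosedCodim F (k - 1) ∧ r = restrNorm A F}

/-- The unit sphere of a subspace. -/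
def subSphere (E : Submodule ℝ V) : Set V := {v : V | v ∈ E ∧ ‖v‖ = 1}

/-- Hausdorff distance between the unit spheres of two subspaces. -/
noncomputable def dHaus (E F : Submodule ℝ V) : ℝ :=
  Metric.hausdorffDist (subSphere E) (subSphere F)

/-- `π` is the (bounded) projection onto `E` parallel to `F`. -/
def IsProjOn (π : V →L[ℝ] V) (E F : Submodule ℝ V) : Prop :=
  (∀ v ∈ E, π v = v) ∧ (∀ v ∈ F, π v = 0)

open scoped Classical in
/-- The (unsigned) determinant `det(A|E)` of `A` restricted to a finite-dimensional
subspace `E`, defined as the ratio of the induced (Haar) volume of the image `A B_E`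
of the unit ball of `E` to that of the unit ball of `A E`; it equals `0` when `A|_E`
is not injective.  (The value of the ratio does not depend on the choice of linear
equivalence with `ℝ^k`, since any two such differ by a linear automorphism, which
rescales both volumes by the same factor.) -/
noncomputable def detOn (A : V →L[ℝ] W) (E : Submodule ℝ V) : ℝ :=
  if h : Nonempty ((↥(E.map A.toLinearMap)) ≃ₗ[ℝ] (Fin (Module.finrank ℝ ↥E) → ℝ)) then
    (volume (⇑h.some '' {w : ↥(E.map A.toLinearMap) | ∃ v ∈ E, ‖v‖ ≤ 1 ∧ A v = (w : W)})).toReal /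
      (volume (⇑h.some '' {w : ↥(E.map A.toLinearMap) | ‖(w : W)‖ ≤ 1})).toReal
  else 0

/-- `V_k(A)`: the maximal `k`-dimensional volume growth of `A`,
`V_k(A) = sup {det(A|E) : E ⊆ V a k-dimensional subspace}`. -/
noncomputable def volGrowth (k : ℕ) (A : V →L[ℝ] W) : ℝ :=
  sSup {r : ℝ | ∃ E : Submodule ℝ V, FiniteDimensional ℝ ↥E ∧ Module.finrank ℝ ↥E = k ∧
    r = detOn A E}

/-- `V_k(A|_G)`: maximal volume growth among `k`-dimensional subspaces of `G`. -/
noncomputable def volGrowthOn (k : ℕ) (A : V →L[ℝ] W) (G : Submodule ℝ V) : ℝ :=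
  sSup {r : ℝ | ∃ E : Submodule ℝ V, E ≤ G ∧ FiniteDimensional ℝ ↥E ∧
    Module.finrank ℝ ↥E = k ∧ r = detOn A E}

/-- `A : X × ℕ → L(V)` is a linear cocycle over `T`. -/
def IsCocycle {X : Type*} (T : X → X) (A : X → ℕ → (V →L[ℝ] V)) : Prop :=
  (∀ x, A x 0 = 1) ∧ ∀ x n m, A x (n + m) = (A (T^[m] x) n).comp (A x m)

/-- Continuity of a subspace-valued map with respect to the Hausdorff distance
between unit spheres. -/
def SubContinuous {X : Type*} [TopologicalSpace X] (𝓔 : X → Submodule ℝ V) : Prop :=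
  ∀ x : X, ∀ ε > (0 : ℝ), ∀ᶠ y in nhds x, dHaus (𝓔 x) (𝓔 y) < ε

end Defs

end
section Splitting

/-! ### Gram determinants -/

variable {V W : Type*} [NormedAddCommGroup V] [InnerProductSpace ℝ V]
  [NormedAddCommGroup W] [InnerProductSpace ℝ W]

/-- The Gram determinant `det (⟨v i, v j⟩)`, i.e. the squared volume of the parallelepiped
spanned by `v`. -/
def gramDet {n : ℕ} (v : Fin n → V) : ℝ := (Matrix.gram ℝ v).det

lemma gramDet_nonneg {n : ℕ} (v : Fin n → V) : 0 ≤ gramDet v :=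
  (Matrix.posSemidef_gram ℝ v).det_nonneg

lemma gramDet_pos {n : ℕ} {v : Fin n → V} (hv : LinearIndependent ℝ v) : 0 < gramDet v :=
  (gramDet_nonneg v).lt_of_ne' (Matrix.det_gram_ne_zero_iff_linearIndependent.2 hv)

lemma gramDet_eq_zero {n : ℕ} {v : Fin n → V} (hv : ¬ LinearIndependent ℝ v) : gramDet v = 0 := by
  by_contra h
  exact hv (Matrix.det_gram_ne_zero_iff_linearIndependent.1 h)

/-- Pythagoras for Gram determinants: expand along the column of the first vector. -/
lemma gramDet_cons_add {n : ℕ} (p q : V) (y : Fin n → V) (hpq : inner ℝ p q = 0)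
    (hqy : ∀ i, inner ℝ q (y i) = 0) :
    gramDet (Fin.cons (p + q) y : Fin (n + 1) → V) =
      gramDet (Fin.cons p y : Fin (n + 1) → V) + ‖q‖ ^ 2 * gramDet y := by
  have hqp : inner ℝ q p = 0 := by rw [real_inner_comm]; exact hpq
  have hyq : ∀ i, inner ℝ (y i) q = 0 := fun i => by rw [real_inner_comm]; exact hqy i
  have hminor : ∀ i : Fin (n + 1),
      (Matrix.gram ℝ (Fin.cons (p + q) y : Fin (n + 1) → V)).submatrix i.succAbove Fin.succ =
      (Matrix.gram ℝ (Fin.cons p y : Fin (n + 1) → V)).submatrix i.succAbove Fin.succ := by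
    intro i
    ext a b
    simp only [Matrix.submatrix_apply, Matrix.gram_apply, Fin.cons_succ]
    refine Fin.cases ?_ (fun j => ?_) (i.succAbove a)
    · simp [inner_add_left, hqy]
    · simp
  have h0 : (Matrix.gram ℝ (Fin.cons p y : Fin (n + 1) → V)).submatrix
      (Fin.succAbove 0) Fin.succ = Matrix.gram ℝ y := by
    ext a b; simp
  unfold gramDet
  rw [Matrix.det_succ_column_zero, Matrix.det_succ_column_zero]
  simp only [hminor]
  rw [Fin.sum_univ_succ, Fin.sum_univ_succ, h0]
  simp only [Matrix.gram_apply, Fin.cons_zero, Fin.cons_succ, inner_add_left, inner_add_right,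
    hpq, hqp, hyq, real_inner_self_eq_norm_sq]
  simp
  ring

lemma gramDet_cons_orthogonal {n : ℕ} (q : V) (y : Fin n → V) (hqy : ∀ i, inner ℝ q (y i) = 0) :
    gramDet (Fin.cons q y : Fin (n + 1) → V) = ‖q‖ ^ 2 * gramDet y := by
  have h := gramDet_cons_add 0 q y (by simp) hqy
  rw [zero_add] at h
  rw [h, gramDet_eq_zero, zero_add]
  intro hli
  exact hli.ne_zero 0 (by simp)

lemma gramDet_cons_smul {n : ℕ} (c : ℝ) (x : V) (y : Fin n → V) :
    gramDet (Fin.cons (c • x) y : Fin (n + 1) → V) =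
      c ^ 2 * gramDet (Fin.cons x y : Fin (n + 1) → V) := by
  have h : Matrix.gram ℝ (Fin.cons (c • x) y : Fin (n + 1) → V) =
      Matrix.diagonal (Fin.cons c 1) * Matrix.gram ℝ (Fin.cons x y : Fin (n + 1) → V) *
        Matrix.diagonal (Fin.cons c 1) := by
    ext i j
    rw [Matrix.mul_diagonal, Matrix.diagonal_mul]
    refine Fin.cases ?_ (fun i => ?_) i <;> refine Fin.cases ?_ (fun j => ?_) j <;>
      simp [inner_smul_left, inner_smul_right,
        -inner_self_eq_norm_sq_to_K] <;> ring
  unfold gramDet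
  rw [h, Matrix.det_mul, Matrix.det_mul, Matrix.det_diagonal]
  simp [Fin.prod_univ_succ]
  ring

/-- The height of a parallelepiped is at most the length of the remaining edge. -/
lemma gramDet_cons_le {n : ℕ} (x : V) (y : Fin n → V) :
    gramDet (Fin.cons x y : Fin (n + 1) → V) ≤ ‖x‖ ^ 2 * gramDet y := by
  set S := Submodule.span ℝ (Set.range y) with hS
  have : FiniteDimensional ℝ S := FiniteDimensional.span_of_finite ℝ (Set.finite_range y)
  set p : V := S.starProjection x
  have hpS : p ∈ S := S.starProjection_apply_mem x
  have hq : x - p ∈ Sᗮ := S.sub_starProjection_mem_orthogonal x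
  have hpq : inner ℝ p (x - p) = 0 := hq p hpS
  have h := gramDet_cons_add p (x - p) y hpq (fun i => by
    rw [real_inner_comm]; exact hq _ (Submodule.subset_span ⟨i, rfl⟩))
  have h0 : gramDet (Fin.cons p y : Fin (n + 1) → V) = 0 := by
    apply gramDet_eq_zero
    rw [linearIndependent_finCons]
    exact fun hh => hh.2 hpS
  rw [add_sub_cancel, h0, zero_add] at h
  rw [h]
  apply mul_le_mul_of_nonneg_right _ (gramDet_nonneg y)
  have : ‖x‖ ^ 2 = ‖p‖ ^ 2 + ‖x - p‖ ^ 2 := by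
    have := norm_add_sq_real p (x - p)
    rw [add_sub_cancel, hpq] at this
    linarith
  nlinarith [sq_nonneg ‖p‖]

/-- Hadamard's inequality, for vectors of norm at most `c`. -/
lemma gramDet_le_pow {c : ℝ} {n : ℕ} (v : Fin n → V) (hv : ∀ i, ‖v i‖ ≤ c) :
    gramDet v ≤ (c ^ 2) ^ n := by
  induction n with
  | zero => simp [gramDet]
  | succ n ih =>
    have h := gramDet_cons_le (v 0) (Fin.tail v)
    rw [Fin.cons_self_tail] at h
    refine h.trans ?_
    rw [pow_succ' (c ^ 2) n]
    have h1 := ih (Fin.tail v) (fun i => hv i.succ)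
    have h2 : ‖v 0‖ ^ 2 ≤ c ^ 2 := by
      have := hv 0
      gcongr
    exact mul_le_mul h2 h1 (gramDet_nonneg _) (sq_nonneg _)

/-- Multiplicativity of Gram determinants: the volume of the image under `B` is the volume times
the volume distortion of `B`, the latter measured on any orthonormal basis. -/
lemma gramDet_map {n : ℕ} (b : OrthonormalBasis (Fin n) ℝ V) (v : Fin n → V) (B : V →ₗ[ℝ] W) :
    gramDet (fun i => B (v i)) = gramDet v * gramDet (fun i => B (b i)) := by
  set M : Matrix (Fin n) (Fin n) ℝ := Matrix.of fun i j => b.repr (v j) i with hM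
  have h1 : Matrix.gram ℝ v = M.transpose * M := by
    rw [Matrix.gram_eq_conjTranspose_mul b v, Matrix.conjTranspose_eq_transpose_of_trivial]
  have h2 : Matrix.gram ℝ (fun i => B (v i)) =
      M.transpose * Matrix.gram ℝ (fun i => B (b i)) * M := by
    ext i j
    have hv : ∀ i, B (v i) = ∑ k, M k i • B (b k) := fun i => by
      conv_lhs => rw [← b.sum_repr (v i)]
      simp [hM]
    rw [Matrix.mul_assoc]
    simp only [Matrix.gram_apply, Matrix.mul_apply, Matrix.transpose_apply]
    rw [hv i, hv j, sum_inner]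
    refine Finset.sum_congr rfl fun k _ => ?_
    rw [inner_smul_left, inner_sum]
    simp only [conj_trivial]
    congr 1
    refine Finset.sum_congr rfl fun l _ => ?_
    rw [inner_smul_right, mul_comm]
  unfold gramDet
  rw [h1, h2]
  simp only [Matrix.det_mul, Matrix.det_transpose]
  ring

lemma gramDet_orthonormalBasis {n : ℕ} (b : OrthonormalBasis (Fin n) ℝ V) :
    gramDet (fun i => b i) = 1 := by
  unfold gramDet
  rw [Matrix.gram_eq_one_iff_orthonormal.2 b.orthonormal, Matrix.det_one]

lemma gramDet_endo {n : ℕ} (b : OrthonormalBasis (Fin n) ℝ V) (f : V →ₗ[ℝ] V) :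
    gramDet (fun i => f (b i)) = LinearMap.det f ^ 2 := by
  have h1 : Matrix.gram ℝ (fun i => f (b i)) =
      (LinearMap.toMatrix b.toBasis b.toBasis f).transpose *
        LinearMap.toMatrix b.toBasis b.toBasis f := by
    rw [Matrix.gram_eq_conjTranspose_mul b, Matrix.conjTranspose_eq_transpose_of_trivial]
    congr 2 <;> ext i j <;> simp [LinearMap.toMatrix_apply]
  unfold gramDet
  rw [h1, Matrix.det_mul, Matrix.det_transpose, LinearMap.det_toMatrix, sq]

/-! ### Comparison of `detOn` and `volGrowth` with Gram determinants -/

/-- The Haar-measure definition of `det(A|E)` agrees with the Gram determinant. -/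
lemma detOn_eq_sqrt {n : ℕ} (A : V →L[ℝ] W) (E : Submodule ℝ V)
    (b : OrthonormalBasis (Fin n) ℝ E) :
    detOn A E = √(gramDet (fun i => A (b i))) := by
  classical
  have : FiniteDimensional ℝ E := b.toBasis.finiteDimensional_of_finite
  have hn : Module.finrank ℝ E = n := by simpa using Module.finrank_eq_card_basis b.toBasis
  subst hn
  set L : E →ₗ[ℝ] E.map A.toLinearMap := A.toLinearMap.submoduleMap E with hL
  have hLs : Function.Surjective L := A.toLinearMap.submoduleMap_surjective E
  have hLA : ∀ v, (L v : W) = A v := fun v => rfl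
  have hgL : gramDet (fun i => A (b i)) = gramDet (fun i => L (b i)) := rfl
  unfold detOn
  split_ifs with h
  · set φ := h.some
    have hfr : Module.finrank ℝ (E.map A.toLinearMap) = Module.finrank ℝ E := by
      simpa using φ.finrank_eq
    let c : OrthonormalBasis (Fin (Module.finrank ℝ E)) ℝ (E.map A.toLinearMap) :=
      (stdOrthonormalBasis ℝ _).reindex (finCongr hfr)
    let ι : (E.map A.toLinearMap) ≃ₗᵢ[ℝ] E := c.equiv b (Equiv.refl _)
    have hι : ∀ i, ι (c i) = b i := fun i => by simp [ι]
    let f : (E.map A.toLinearMap) →ₗ[ℝ] (E.map A.toLinearMap) := L ∘ₗ ι.toLinearEquiv.toLinearMap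
    set S : Set (E.map A.toLinearMap) := {w | ‖(w : W)‖ ≤ 1} with hS
    have hT : {w : E.map A.toLinearMap | ∃ v ∈ E, ‖v‖ ≤ 1 ∧ A v = (w : W)} = f '' S := by
      ext w
      constructor
      · rintro ⟨v, hv, hv1, hvw⟩
        refine ⟨ι.symm ⟨v, hv⟩, ?_, ?_⟩
        · change ‖ι.symm ⟨v, hv⟩‖ ≤ 1
          rw [ι.symm.norm_map]; exact hv1
        · apply Subtype.ext
          rw [← hvw]
          change (L (ι (ι.symm ⟨v, hv⟩)) : W) = _
          rw [ι.apply_symm_apply]; rfl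
      · rintro ⟨x, hx, rfl⟩
        refine ⟨ι x, (ι x).2, ?_, rfl⟩
        change ‖ι x‖ ≤ 1
        rw [ι.norm_map]; exact hx
    have himg : φ '' (f '' S) = (φ.toLinearMap ∘ₗ f ∘ₗ φ.symm.toLinearMap) '' (φ '' S) := by
      simp [Set.image_image]
    rw [hT, himg, Measure.addHaar_image_linearMap, LinearMap.det_conj, hgL]
    have hG : gramDet (fun i => L (b i)) = LinearMap.det f ^ 2 := by
      rw [← gramDet_endo c f]
      congr 1
      ext i
      simp [f, hι]
    rw [hG, Real.sqrt_sq_eq_abs, ENNReal.toReal_mul, ENNReal.toReal_ofReal (abs_nonneg _)]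
    have hSball : S = Metric.closedBall 0 1 := by ext w; simp [hS]
    let Φ := φ.toContinuousLinearEquiv
    have hΦ : φ '' S = Φ '' S := rfl
    have hcomp : IsCompact (φ '' S) := by
      rw [hΦ, hSball]
      exact (isCompact_closedBall _ _).image Φ.continuous
    have hpos : 0 < volume (φ '' S) := by
      refine Measure.measure_pos_of_mem_nhds volume (x := 0) ?_
      rw [hΦ, hSball, ← Φ.map_zero]
      exact Φ.toHomeomorph.isOpenMap.image_mem_nhds (Metric.closedBall_mem_nhds _ one_pos)
    have : (volume (φ '' S)).toReal ≠ 0 :=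
      (ENNReal.toReal_pos hpos.ne' hcomp.measure_lt_top.ne).ne'
    field_simp
  · symm
    rw [hgL, gramDet_eq_zero, Real.sqrt_zero]
    intro hli
    apply h
    refine FiniteDimensional.nonempty_linearEquiv_of_finrank_eq ?_
    rw [Module.finrank_fin_fun]
    apply le_antisymm (Submodule.finrank_map_le _ _)
    simpa using hli.fintype_card_le_finrank

lemma detOn_nonneg (A : V →L[ℝ] W) (E : Submodule ℝ V) : 0 ≤ detOn A E := by
  unfold detOn
  split_ifs
  · positivity
  · exact le_rfl

/-- An orthonormal basis of a subspace of known dimension. -/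
noncomputable def onb (E : Submodule ℝ V) [FiniteDimensional ℝ E] {n : ℕ}
    (h : Module.finrank ℝ E = n) :
    OrthonormalBasis (Fin n) ℝ E :=
  (stdOrthonormalBasis ℝ E).reindex (finCongr h)

/-- The supremum defining `V_k(A)` is finite, by Hadamard's inequality. -/
lemma bddAbove_detOn (k : ℕ) (A : V →L[ℝ] W) :
    BddAbove {r : ℝ | ∃ E : Submodule ℝ V, FiniteDimensional ℝ ↥E ∧ Module.finrank ℝ ↥E = k ∧
      r = detOn A E} := by
  refine ⟨√((‖A‖ ^ 2) ^ k), ?_⟩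
  rintro _ ⟨E, hfd, hE, rfl⟩
  rw [detOn_eq_sqrt A E (onb E hE)]
  apply Real.sqrt_le_sqrt
  apply gramDet_le_pow
  intro i
  have h1 : ‖((onb E hE i : E) : V)‖ = 1 := (onb E hE).orthonormal.1 i
  simpa [h1] using A.le_opNorm ((onb E hE i : E) : V)

lemma detOn_le_volGrowth {k : ℕ} (A : V →L[ℝ] W) (E : Submodule ℝ V) [FiniteDimensional ℝ E]
    (hE : Module.finrank ℝ E = k) : detOn A E ≤ volGrowth k A :=
  le_csSup (bddAbove_detOn k A) ⟨E, inferInstance, hE, rfl⟩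

lemma volGrowth_nonneg (k : ℕ) (A : V →L[ℝ] W) : 0 ≤ volGrowth k A := by
  apply Real.sSup_nonneg
  rintro _ ⟨E, -, -, rfl⟩
  exact detOn_nonneg A E

/-- `V_k(A)` dominates the volume of the image of any parallelepiped with edges of length at most
one, orthonormal or not. -/
lemma gramDet_le_volGrowth_sq {k : ℕ} (A : V →L[ℝ] W) (v : Fin k → V) (hv : ∀ i, ‖v i‖ ≤ 1) :
    gramDet (fun i => A (v i)) ≤ volGrowth k A ^ 2 := by
  by_cases hli : LinearIndependent ℝ v
  · set S := Submodule.span ℝ (Set.range v)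
    have : FiniteDimensional ℝ S := FiniteDimensional.span_of_finite ℝ (Set.finite_range v)
    have hS : Module.finrank ℝ S = k := by simpa using finrank_span_eq_card hli
    let v' : Fin k → S := fun i => ⟨v i, Submodule.subset_span ⟨i, rfl⟩⟩
    have h1 : gramDet (fun i => A (v i)) =
        gramDet v' * gramDet (fun i => A (onb S hS i)) :=
      gramDet_map (onb S hS) v' (A.toLinearMap ∘ₗ S.subtype)
    have h2 : gramDet v' ≤ 1 := by simpa using gramDet_le_pow (c := 1) v' hv
    have h3 := detOn_le_volGrowth A S hS
    rw [detOn_eq_sqrt A S (onb S hS)] at h3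
    rw [h1]
    have h5 := (Real.sqrt_le_iff.1 h3).2
    nlinarith [gramDet_nonneg (fun i => A (onb S hS i))]
  · rw [gramDet_eq_zero]
    · positivity
    · intro h
      exact hli (LinearIndependent.of_comp A.toLinearMap h)

lemma detOn_pos (A : V →L[ℝ] W) (E : Submodule ℝ V) [FiniteDimensional ℝ E]
    (hA : ∀ v ∈ E, A v = 0 → v = 0) : 0 < detOn A E := by
  rw [detOn_eq_sqrt A E (onb E rfl)]
  apply Real.sqrt_pos.2
  apply gramDet_pos
  refine (onb E rfl).orthonormal.linearIndependent.map' (A.toLinearMap ∘ₗ E.subtype) ?_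
  rw [LinearMap.ker_eq_bot']
  intro v hv
  exact Subtype.ext (hA v v.2 hv)

lemma injOn_of_detOn_pos (A : V →L[ℝ] W) (E : Submodule ℝ V) [FiniteDimensional ℝ E]
    (h : 0 < detOn A E) : ∀ v ∈ E, A v = 0 → v = 0 := by
  rw [detOn_eq_sqrt A E (onb E rfl), Real.sqrt_pos] at h
  have hli : LinearIndependent ℝ (fun i => A (onb E rfl i)) :=
    Matrix.det_gram_ne_zero_iff_linearIndependent.1 h.ne'
  intro v hv hAv
  have hs := (onb E rfl).sum_repr ⟨v, hv⟩
  have hs' : A (∑ i, (onb E rfl).repr ⟨v, hv⟩ i • ((onb E rfl i : E) : V)) = 0 := by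
    rw [← hAv]
    congr 1
    simpa using congrArg (Subtype.val) hs
  rw [map_sum] at hs'
  simp only [map_smul] at hs'
  have h0 := Fintype.linearIndependent_iff.1 hli _ hs'
  simp only [h0, zero_smul, Finset.sum_const_zero] at hs
  exact (congrArg Subtype.val hs).symm

/-! ### The complement and Gelfand numbers -/

/-- The subspace `F = {v : A v ⟂ A E}`. -/
noncomputable abbrev perpPreimage (A : V →L[ℝ] W) (E : Submodule ℝ V) : Submodule ℝ V :=
  Submodule.comap A.toLinearMap ((E.map A.toLinearMap)ᗮ)

lemma inner_perpPreimage {A : V →L[ℝ] W} {E : Submodule ℝ V} {v e : V}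
    (hv : v ∈ perpPreimage A E) (he : e ∈ E) : inner ℝ (A v) (A e) = 0 := by
  rw [real_inner_comm]
  exact hv (A e) ⟨e, he, rfl⟩

/-- If `A` is injective on `E`, then `F` complements `E`: the orthogonal projection of `A v` onto
`A E` is `A e` for some `e ∈ E`, and then `v - e ∈ F`. -/
lemma isCompl_perpPreimage (A : V →L[ℝ] W) (E : Submodule ℝ V) [FiniteDimensional ℝ E]
    (hA : ∀ v ∈ E, A v = 0 → v = 0) : IsCompl E (perpPreimage A E) := by
  constructor
  · rw [Submodule.disjoint_def]
    intro v hv hvF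
    exact hA v hv (inner_self_eq_zero.1 (inner_perpPreimage hvF hv))
  · rw [codisjoint_iff, eq_top_iff]
    intro v _
    obtain ⟨e, he, hev⟩ := (E.map A.toLinearMap).starProjection_apply_mem (A v)
    refine Submodule.mem_sup.2 ⟨e, he, v - e, ?_, by abel⟩
    change A (v - e) ∈ (E.map A.toLinearMap)ᗮ
    rw [map_sub]
    have := (E.map A.toLinearMap).sub_starProjection_mem_orthogonal (A v)
    rw [← hev] at this
    exact this

lemma closedCodim_perpPreimage [FiniteDimensional ℝ V] (A : V →L[ℝ] W) (E : Submodule ℝ V)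
    (hA : ∀ v ∈ E, A v = 0 → v = 0) : ClosedCodim (perpPreimage A E) (Module.finrank ℝ E) :=
  ⟨Submodule.closed_of_finiteDimensional _, inferInstance,
    (Submodule.quotientEquivOfIsCompl _ _ (isCompl_perpPreimage A E hA).symm).finrank_eq⟩

lemma restrNorm_nonneg (A : V →L[ℝ] W) (F : Submodule ℝ V) : 0 ≤ restrNorm A F := by
  unfold restrNorm
  exact norm_nonneg (A.comp F.subtypeL)

lemma gelfand_le {k : ℕ} {A : V →L[ℝ] W} {F : Submodule ℝ V} (hF : ClosedCodim F (k - 1)) :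
    gelfand k A ≤ restrNorm A F := by
  refine csInf_le ⟨0, ?_⟩ ⟨F, hF, rfl⟩
  rintro _ ⟨G, -, rfl⟩
  exact restrNorm_nonneg A G

lemma restrNorm_le {A : V →L[ℝ] W} {F : Submodule ℝ V} {C : ℝ} (hC : 0 ≤ C)
    (h : ∀ v ∈ F, ‖v‖ = 1 → ‖A v‖ ≤ C) : restrNorm A F ≤ C := by
  unfold restrNorm
  exact ContinuousLinearMap.opNorm_le_of_unit_norm hC fun v hv => h v v.2 hv

lemma le_restrNorm (A : V →L[ℝ] W) {F : Submodule ℝ V} {v : V} (hv : v ∈ F) (h1 : ‖v‖ = 1) :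
    ‖A v‖ ≤ restrNorm A F := by
  have := (A.comp F.subtypeL).le_opNorm ⟨v, hv⟩
  have h2 : ‖(⟨v, hv⟩ : F)‖ = 1 := h1
  rw [h2, mul_one] at this
  exact this

/-- A unit vector of a subspace extends to an orthonormal basis of it. -/
lemma exists_onb_zero_eq {E : Submodule ℝ V} [FiniteDimensional ℝ E] {n : ℕ}
    (hE : Module.finrank ℝ E = n + 1) {e : V} (he : e ∈ E) (h1 : ‖e‖ = 1) :
    ∃ b : OrthonormalBasis (Fin (n + 1)) ℝ E, (b 0 : V) = e := by
  have ho : Orthonormal ℝ (({0} : Set (Fin (n + 1))).domRestrict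
      (fun _ : Fin (n + 1) => (⟨e, he⟩ : E))) := by
    constructor
    · intro i; exact h1
    · intro i j hij; exact (hij (Subsingleton.elim i j)).elim
  obtain ⟨b, hb⟩ := ho.exists_orthonormalBasis_extension_of_card_eq (by simp [hE])
  exact ⟨b, by rw [hb 0 rfl]⟩

/-- The Gram determinant of an image family, with the first vector separated off. -/
lemma gramDet_split {n : ℕ} (A : V →L[ℝ] W) (v : Fin (n + 1) → V) :
    gramDet (fun i => A (v i)) =
      gramDet (Fin.cons (A (v 0)) (fun i => A (v i.succ)) : Fin (n + 1) → W) := by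
  congr 1
  ext i
  refine Fin.cases rfl (fun j => rfl) i

lemma gramDet_eq_detOn_sq {n : ℕ} (A : V →L[ℝ] W) (E : Submodule ℝ V)
    (b : OrthonormalBasis (Fin n) ℝ E) : gramDet (fun i => A (b i)) = detOn A E ^ 2 := by
  rw [detOn_eq_sqrt A E b, Real.sq_sqrt (gramDet_nonneg _)]

lemma injOn_span {n : ℕ} (A : V →L[ℝ] W) (y : Fin n → V)
    (hli : LinearIndependent ℝ (fun i => A (y i))) :
    ∀ v ∈ Submodule.span ℝ (Set.range y), A v = 0 → v = 0 := by
  intro v hv hAv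
  obtain ⟨c, rfl⟩ := (Submodule.mem_span_range_iff_exists_fun ℝ).1 hv
  have : ∑ i, c i • A (y i) = 0 := by rw [← hAv]; simp
  have h0 := Fintype.linearIndependent_iff.1 hli c this
  simp [h0]

/-- Adding to `y` a unit vector of `{v : A v ⟂ A y i for all i}`, a subspace of codimension `n`,
multiplies the volume of the image by `‖A v‖`, and `‖A v‖` can be made at least
`σ_{n+1}(A)`. -/
lemma gelfand_mul_le [FiniteDimensional ℝ V] {n : ℕ} (A : V →L[ℝ] W) (y : Fin n → V)
    (hy : ∀ i, ‖y i‖ ≤ 1) (hli : LinearIndependent ℝ (fun i => A (y i))) :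
    gelfand (n + 1) A * √(gramDet (fun i => A (y i))) ≤ volGrowth (n + 1) A := by
  set S := Submodule.span ℝ (Set.range y)
  have hS : Module.finrank ℝ S = n := by
    simpa using finrank_span_eq_card (LinearIndependent.of_comp A.toLinearMap hli)
  have hpos : 0 < √(gramDet (fun i => A (y i))) := Real.sqrt_pos.2 (gramDet_pos hli)
  have hinj : ∀ v ∈ S, A v = 0 → v = 0 := injOn_span A y hli
  rw [← le_div_iff₀ hpos]
  have hcod := closedCodim_perpPreimage A S hinj
  rw [hS] at hcod
  refine (gelfand_le (k := n + 1) hcod).trans (restrNorm_le ?_ ?_)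
  · exact div_nonneg (volGrowth_nonneg _ _) hpos.le
  · intro v hv h1
    rw [le_div_iff₀ hpos]
    apply abs_le_of_sq_le_sq' _ (volGrowth_nonneg _ _) |>.2
    rw [mul_pow, Real.sq_sqrt (gramDet_nonneg _), ← gramDet_cons_orthogonal]
    · have := gramDet_le_volGrowth_sq A (Fin.cons v y : Fin (n + 1) → V) (by
        intro i
        refine Fin.cases ?_ (fun j => ?_) i
        · simp [h1]
        · simpa using hy j)
      rw [gramDet_split] at this
      simpa using this
    · intro i
      exact inner_perpPreimage hv (Submodule.subset_span ⟨i, rfl⟩)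

/-! ### The three estimates -/

/-- For a unit vector `e ∈ E` completed to an orthonormal basis of `E`, let `D` be the volume of
the image of the remaining basis vectors. Then `r V_k ≤ det(A|E) ≤ ‖A e‖ D`, while
`σ_k D ≤ V_k`; cancel `D`. -/
lemma mul_gelfand_le_minNorm [FiniteDimensional ℝ V] {n : ℕ} (A : V →L[ℝ] W) (E : Submodule ℝ V)
    (hE : Module.finrank ℝ E = n + 1) {r : ℝ} (hr : 0 < r) (hpos : 0 < detOn A E)
    (hdet : r * volGrowth (n + 1) A ≤ detOn A E) : r * gelfand (n + 1) A ≤ minNorm A E := by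
  refine le_csInf ?_ ?_
  · refine ⟨_, (onb E hE 0 : E), (onb E hE 0).2, (onb E hE).orthonormal.1 0, rfl⟩
  rintro _ ⟨e, he, h1, rfl⟩
  obtain ⟨b, rfl⟩ := exists_onb_zero_eq hE he h1
  have hli : LinearIndependent ℝ (fun i : Fin (n + 1) => A (b i)) := by
    apply Matrix.det_gram_ne_zero_iff_linearIndependent.1
    change gramDet _ ≠ 0
    rw [gramDet_eq_detOn_sq]
    positivity
  have hli' : LinearIndependent ℝ (fun i : Fin n => A (b i.succ)) :=
    hli.comp Fin.succ (Fin.succ_injective n)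
  have h2 := gelfand_mul_le A (fun i : Fin n => (b i.succ : V))
    (fun i => (b.orthonormal.1 i.succ).le) hli'
  have h3 : detOn A E ≤ ‖A (b 0)‖ * √(gramDet (fun i : Fin n => A (b i.succ))) := by
    apply abs_le_of_sq_le_sq' _ (by positivity) |>.2
    rw [← gramDet_eq_detOn_sq A E b, gramDet_split A (fun i => (b i : V)), mul_pow,
      Real.sq_sqrt (gramDet_nonneg _)]
    exact gramDet_cons_le _ _
  have h4 : 0 < √(gramDet (fun i : Fin n => A (b i.succ))) := Real.sqrt_pos.2 (gramDet_pos hli')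
  refine le_of_mul_le_mul_right ?_ h4
  calc _ = r * (gelfand (n + 1) A * √(gramDet (fun i : Fin n => A (b i.succ)))) := by ring
    _ ≤ r * volGrowth (n + 1) A := by gcongr
    _ ≤ _ := hdet.trans h3

/-- If `v` is a unit vector with component `e` in `E` along `F`, then
`‖e‖ det(A|E) ≤ V_k(A) ≤ r⁻¹ det(A|E)`. -/
lemma norm_proj_le [FiniteDimensional ℝ V] {n : ℕ} (A : V →L[ℝ] W) (E : Submodule ℝ V)
    (hE : Module.finrank ℝ E = n + 1) {r : ℝ} (hr : 0 < r) (hpos : 0 < detOn A E)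
    (hdet : r * volGrowth (n + 1) A ≤ detOn A E)
    {v e : V} (hv : ‖v‖ = 1) (he : e ∈ E) (hve : v - e ∈ perpPreimage A E) :
    ‖e‖ ≤ r⁻¹ := by
  by_cases he0 : e = 0
  · simp [he0, hr.le]
  have hne : ‖e‖ ≠ 0 := norm_ne_zero_iff.2 he0
  obtain ⟨b, hb⟩ := exists_onb_zero_eq hE (E.smul_mem (‖e‖⁻¹) he)
    (by rw [norm_smul, norm_inv, norm_norm, inv_mul_cancel₀ hne])
  have heb : e = ‖e‖ • (b 0 : V) := by rw [hb, smul_smul, mul_inv_cancel₀ hne, one_smul]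
  -- Replace the first basis vector `e / ‖e‖` by `v`; the component `A (v - e)` of `A v`
  -- orthogonal to `A E` can only increase the volume.
  have h1 : gramDet (Fin.cons (A v) (fun i => A (b i.succ)) : Fin (n + 1) → W) ≤
      volGrowth (n + 1) A ^ 2 := by
    have := gramDet_le_volGrowth_sq A (Fin.cons v (fun i => (b i.succ : V)) : Fin (n + 1) → V) (by
      intro i
      refine Fin.cases ?_ (fun j => ?_) i
      · simp [hv]
      · exact (b.orthonormal.1 j.succ).le)
    rw [gramDet_split] at this
    simpa using this
  have h2 : gramDet (Fin.cons (A v) (fun i => A (b i.succ)) : Fin (n + 1) → W) =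
      ‖e‖ ^ 2 * detOn A E ^ 2 +
        ‖A (v - e)‖ ^ 2 * gramDet (fun i : Fin n => A (b i.succ)) := by
    have hAv : A v = A e + A (v - e) := by rw [← map_add, add_sub_cancel]
    rw [hAv, gramDet_cons_add, ← gramDet_eq_detOn_sq A E b, gramDet_split A (fun i => (b i : V)),
      ← gramDet_cons_smul, ← map_smul, ← heb]
    · rw [real_inner_comm]
      exact inner_perpPreimage hve he
    · intro i
      exact inner_perpPreimage hve (b i.succ).2
  have h3 : ‖e‖ * detOn A E ≤ volGrowth (n + 1) A := by
    apply abs_le_of_sq_le_sq' _ (volGrowth_nonneg _ _) |>.2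
    have := gramDet_nonneg (fun i : Fin n => A (b i.succ))
    have : 0 ≤ ‖A (v - e)‖ ^ 2 * gramDet (fun i : Fin n => A (b i.succ)) := by positivity
    rw [mul_pow]
    linarith
  rw [← one_div, le_div_iff₀ hr]
  refine le_of_mul_le_mul_right ?_ hpos
  calc ‖e‖ * r * detOn A E = r * (‖e‖ * detOn A E) := by ring
    _ ≤ r * volGrowth (n + 1) A := by gcongr
    _ ≤ 1 * detOn A E := by rw [one_mul]; exact hdet

/-- For a unit `v ∈ F` and any `G` of codimension `k`, the volume `‖A v‖ det(A|E)` of the image of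
`v` and an orthonormal basis of `E` is at most that of an orthonormal basis of `S = E + ℝ v`
whose first member lies in `G`, hence at most `‖A|_G‖ V_k(A)`. -/
lemma norm_perp_le [FiniteDimensional ℝ V] {n : ℕ} (A : V →L[ℝ] W) (E : Submodule ℝ V)
    (hE : Module.finrank ℝ E = n + 1) {r : ℝ} (hr : 0 < r) (hpos : 0 < detOn A E)
    (hdet : r * volGrowth (n + 1) A ≤ detOn A E)
    (G : Submodule ℝ V) (hG : ClosedCodim G (n + 1)) {v : V} (hv : ‖v‖ = 1)
    (hvF : v ∈ perpPreimage A E) : ‖A v‖ ≤ r⁻¹ * restrNorm A G := by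
  have hinj := injOn_of_detOn_pos A E hpos
  have hvE : v ∉ E := fun hvE => by
    have := (Submodule.disjoint_def.1 (isCompl_perpPreimage A E hinj).disjoint) v hvE hvF
    simp [this] at hv
  let b := onb E hE
  have hb1 : ∀ i, ‖(b i : V)‖ = 1 := b.orthonormal.1
  let u : Fin (n + 2) → V := Fin.cons v (fun i => (b i : V))
  have hu1 : ∀ i, ‖u i‖ ≤ 1 := by
    intro i
    refine Fin.cases ?_ (fun j => ?_) i
    · simp [u, hv]
    · simpa [u] using (hb1 j).le
  have hli : LinearIndependent ℝ u := by
    rw [linearIndependent_finCons]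
    refine ⟨b.orthonormal.linearIndependent.map' E.subtype E.ker_subtype, fun h => hvE ?_⟩
    refine Submodule.span_le.2 ?_ h
    rintro _ ⟨i, rfl⟩
    exact (b i).2
  set S := Submodule.span ℝ (Set.range u)
  have hS : Module.finrank ℝ S = n + 2 := by simpa using finrank_span_eq_card hli
  -- `dim S > codim G`, so `S` contains a unit vector `w` of `G`.
  obtain ⟨w, hwG, hwS, hw1⟩ : ∃ w ∈ G, w ∈ S ∧ ‖w‖ = 1 := by
    have h1 := Submodule.finrank_sup_add_finrank_inf_eq G S
    have h2 := Submodule.finrank_quotient_add_finrank G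
    have h3 := Submodule.finrank_le (G ⊔ S)
    rw [hG.2.2] at h2
    have hne : G ⊓ S ≠ ⊥ := by
      intro h
      rw [h, finrank_bot] at h1
      omega
    obtain ⟨x, hx, hx0⟩ := Submodule.exists_mem_ne_zero_of_ne_bot hne
    refine ⟨‖x‖⁻¹ • x, G.smul_mem _ hx.1, S.smul_mem _ hx.2, ?_⟩
    rw [norm_smul, norm_inv, norm_norm, inv_mul_cancel₀ (norm_ne_zero_iff.2 hx0)]
  obtain ⟨c, hc⟩ := exists_onb_zero_eq hS hwS hw1
  let u' : Fin (n + 2) → S := fun i => ⟨u i, Submodule.subset_span ⟨i, rfl⟩⟩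
  have h1 : gramDet (fun i => A (u i)) = gramDet u' * gramDet (fun i => A (c i)) :=
    gramDet_map c u' (A.toLinearMap ∘ₗ S.subtype)
  have h2 : gramDet u' ≤ 1 := by simpa using gramDet_le_pow (c := 1) u' hu1
  have h3 : gramDet (fun i => A (c i)) ≤ restrNorm A G ^ 2 * volGrowth (n + 1) A ^ 2 := by
    rw [gramDet_split A (fun i => (c i : V))]
    refine (gramDet_cons_le _ _).trans ?_
    rw [hc]
    have hg := le_restrNorm A hwG hw1
    have hV := gramDet_le_volGrowth_sq A (fun i : Fin (n + 1) => (c i.succ : V))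
      (fun i => (c.orthonormal.1 i.succ).le)
    exact mul_le_mul (by gcongr) hV (gramDet_nonneg _) (sq_nonneg _)
  have h4 : gramDet (fun i => A (u i)) = ‖A v‖ ^ 2 * detOn A E ^ 2 := by
    rw [gramDet_split, ← gramDet_eq_detOn_sq A E b]
    exact gramDet_cons_orthogonal _ _ (fun i => inner_perpPreimage hvF (b i).2)
  have hg0 : 0 ≤ restrNorm A G := restrNorm_nonneg A G
  have h5 : ‖A v‖ * detOn A E ≤ restrNorm A G * volGrowth (n + 1) A := by
    apply abs_le_of_sq_le_sq' _ (mul_nonneg hg0 (volGrowth_nonneg _ _)) |>.2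
    rw [mul_pow, mul_pow, ← h4, h1]
    nlinarith [gramDet_nonneg (fun i => A (c i))]
  rw [← div_eq_inv_mul, le_div_iff₀ hr]
  refine le_of_mul_le_mul_right ?_ hpos
  calc ‖A v‖ * r * detOn A E = r * (‖A v‖ * detOn A E) := by ring
    _ ≤ r * (restrNorm A G * volGrowth (n + 1) A) := by gcongr
    _ = restrNorm A G * (r * volGrowth (n + 1) A) := by ring
    _ ≤ restrNorm A G * detOn A E := by gcongr


/-- `V_k(A) > 0` when `A` has rank at least `k`: preimages of `k` independent vectors of the range
span a `k`-dimensional subspace on which `A` is injective. -/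
lemma volGrowth_pos [FiniteDimensional ℝ V] {k : ℕ} (A : V →L[ℝ] W)
    (hrank : (k : Cardinal) ≤ LinearMap.rank A.toLinearMap) : 0 < volGrowth k A := by
  obtain ⟨w, hcard, hli⟩ := LinearMap.le_rank_iff_exists_linearIndependent_finset.1 hrank
  let y : Fin k → V := fun i => (w.equivFinOfCardEq hcard).symm i
  have hli' : LinearIndependent ℝ (fun i => A (y i)) := hli.comp _ (Equiv.injective _)
  have hS : Module.finrank ℝ (Submodule.span ℝ (Set.range y)) = k := by
    simpa using finrank_span_eq_card (LinearIndependent.of_comp A.toLinearMap hli')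
  exact (detOn_pos A _ (injOn_span A y hli')).trans_le (detOn_le_volGrowth A _ hS)

end Splitting

/-- **Proposition 5.3 (singular value splitting on Euclidean space).**
Here `σ_i(A)` is formalized as `gelfand i A`, which on Euclidean space coincides
with the `i`-th singular value, and `V_k(A) = volGrowth k A = ∏_{i=1}^k σ_i(A)`. -/
theorem euclidean_singular_value_splitting
    (d k : ℕ) (hk : 1 ≤ k) (hkd : k < d)
    (A : EuclideanSpace ℝ (Fin d) →L[ℝ] EuclideanSpace ℝ (Fin d))
    (hrank : (k : Cardinal) ≤ LinearMap.rank A.toLinearMap)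
    (E : Submodule ℝ (EuclideanSpace ℝ (Fin d)))
    (hE : Module.finrank ℝ ↥E = k)
    (r : ℝ) (hr : r ∈ Set.Ioc (0:ℝ) 1)
    (hdet : detOn A E = r * volGrowth k A) :
    IsCompl E (Submodule.comap A.toLinearMap ((E.map A.toLinearMap)ᗮ)) ∧
    r * gelfand k A ≤ minNorm A E ∧
    restrNorm A (Submodule.comap A.toLinearMap ((E.map A.toLinearMap)ᗮ)) ≤
      r⁻¹ * gelfand (k+1) A ∧
    ∃ π, IsProjOn π E (Submodule.comap A.toLinearMap ((E.map A.toLinearMap)ᗮ)) ∧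
      ‖π‖ ≤ r⁻¹ := by
  obtain ⟨n, rfl⟩ : ∃ n, k = n + 1 := ⟨k - 1, by omega⟩
  have hr0 : 0 < r := hr.1
  have hpos : 0 < detOn A E := hdet ▸ mul_pos hr0 (volGrowth_pos A hrank)
  have hinj := injOn_of_detOn_pos A E hpos
  have hcompl := isCompl_perpPreimage A E hinj
  refine ⟨hcompl, mul_gelfand_le_minNorm A E hE hr0 hpos hdet.ge, ?_, ?_⟩
  · rw [← div_eq_inv_mul, le_div_iff₀ hr0, mul_comm]
    refine le_csInf ⟨_, perpPreimage A E, hE ▸ closedCodim_perpPreimage A E hinj, rfl⟩ ?_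
    rintro _ ⟨G, hG, rfl⟩
    rw [mul_comm, ← le_div_iff₀ hr0, div_eq_inv_mul]
    refine restrNorm_le (mul_nonneg (inv_nonneg.2 hr0.le) (restrNorm_nonneg A G)) fun v hv h1 => ?_
    exact norm_perp_le A E hE hr0 hpos hdet.ge G hG h1 hv
  · refine ⟨(E.projection _ hcompl).toContinuousLinearMap, ⟨fun v hv => ?_, fun v hv => ?_⟩, ?_⟩
    · exact Submodule.projection_apply_of_mem_left hcompl hv
    · exact (Submodule.projection_apply_eq_zero_iff hcompl).2 hv
    · refine ContinuousLinearMap.opNorm_le_of_unit_norm (inv_nonneg.2 hr0.le) fun v hv => ?_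
      exact norm_proj_le A E hE hr0 hpos hdet.ge hv (Submodule.projection_apply_mem hcompl v)
        (Submodule.sub_projection_mem hcompl v)
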